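/- Suppose the square matrix [r Q] ∈ ℝ^{(m+1)×(m+1)} (the column r followed by the columns of Q) is invertible. Let λ† denote the smallest eigenvalue of F = QᵀQ − wᵀw. Then there exists u ∈ ℝ^m satisfying ‖Q u + r‖₂ ≤ w u + v if and only if H is not positive definite and one of the following three cases holds: (1) λ† < 0; (2) λ† > 0 and v − w F⁻¹ (Qᵀr − wᵀv) ≥ 0; (3) λ† = 0 and v − w (QᵀQ)⁻¹ Qᵀ r > 0. (Necessary and sufficient condition for pointwise feasibility, Theorem 2 of the paper.) -/

import Mathlib

open Matrix

/-- The Euclidean norm of a vector in `ℝ^{m+1}`. -/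
noncomputable def eucNorm {n : ℕ} (x : Fin n → ℝ) : ℝ :=
  Real.sqrt (x ⬝ᵥ x)

/-- The vector `(1, uᵀ)ᵀ ∈ ℝ^{m+1}`, indexed by `Fin 1 ⊕ Fin m`. -/
def onePad {m : ℕ} (u : Fin m → ℝ) : Fin 1 ⊕ Fin m → ℝ :=
  Sum.elim (fun _ => (1 : ℝ)) u

/-- The symmetric matrix
`H = [[rᵀr − v², rᵀQ − v w], [Qᵀr − wᵀv, QᵀQ − wᵀw]]`. -/
noncomputable def socMatH {m : ℕ} (Q : Matrix (Fin (m + 1)) (Fin m) ℝ)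
    (r : Fin (m + 1) → ℝ) (w : Fin m → ℝ) (v : ℝ) :
    Matrix (Fin 1 ⊕ Fin m) (Fin 1 ⊕ Fin m) ℝ :=
  Matrix.fromBlocks
    (Matrix.of fun _ _ => r ⬝ᵥ r - v ^ 2)
    (Matrix.of fun _ j => (Qᵀ *ᵥ r) j - v * w j)
    (Matrix.of fun i _ => (Qᵀ *ᵥ r) i - v * w i)
    (Qᵀ * Q - Matrix.vecMulVec w w)

lemma dotProduct_gram_sub_vecMulVec_mulVec {n k : Type*} [Fintype n] [Fintype k]
    (Q : Matrix k n ℝ) (w x : n → ℝ) :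
    x ⬝ᵥ (Qᵀ * Q - vecMulVec w w) *ᵥ x = (Q *ᵥ x) ⬝ᵥ (Q *ᵥ x) - (w ⬝ᵥ x) ^ 2 := by
  rw [sub_mulVec, dotProduct_sub, ← mulVec_mulVec, dotProduct_transpose_mulVec,
    vecMulVec_mulVec, op_smul_eq_smul, dotProduct_smul, smul_eq_mul, dotProduct_comm x w]
  ring

lemma dotProduct_socMatH_mulVec {m : ℕ} (Q : Matrix (Fin (m + 1)) (Fin m) ℝ)
    (r : Fin (m + 1) → ℝ) (w : Fin m → ℝ) (v a : ℝ) (y : Fin m → ℝ) :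
    Sum.elim (fun _ => a) y ⬝ᵥ socMatH Q r w v *ᵥ Sum.elim (fun _ => a) y =
      (Q *ᵥ y + a • r) ⬝ᵥ (Q *ᵥ y + a • r) - (w ⬝ᵥ y + a * v) ^ 2 := by
  have top : (of fun (_ : Fin 1) j => (Qᵀ *ᵥ r) j - v * w j) *ᵥ y =
      fun _ => r ⬝ᵥ Q *ᵥ y - v * (w ⬝ᵥ y) := by
    funext i
    change (Qᵀ *ᵥ r - v • w) ⬝ᵥ y = _
    rw [sub_dotProduct, dotProduct_comm, dotProduct_transpose_mulVec, smul_dotProduct,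
      smul_eq_mul]
  have left : (of fun i (_ : Fin 1) => (Qᵀ *ᵥ r) i - v * w i) *ᵥ (fun _ => a) =
      a • (Qᵀ *ᵥ r - v • w) := by
    funext i
    simp [mulVec, dotProduct, mul_comm]
  have corner : (of fun (_ : Fin 1) (_ : Fin 1) => r ⬝ᵥ r - v ^ 2) *ᵥ (fun _ => a) =
      fun _ => (r ⬝ᵥ r - v ^ 2) * a := by
    funext i
    simp [mulVec, dotProduct]
  rw [socMatH, fromBlocks_mulVec, Sum.elim_comp_inl, Sum.elim_comp_inr, top, left, corner,
    sumElim_dotProduct_sumElim, dotProduct_add y, dotProduct_gram_sub_vecMulVec_mulVec,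
    dotProduct_smul, dotProduct_sub, dotProduct_transpose_mulVec, dotProduct_smul,
    dotProduct_comm y w]
  simp only [add_dotProduct, dotProduct_add, smul_dotProduct, dotProduct_smul, smul_eq_mul,
    dotProduct_comm (Q *ᵥ y) r]
  simp [dotProduct]
  ring

lemma isHermitian_socMatH {m : ℕ} (Q : Matrix (Fin (m + 1)) (Fin m) ℝ)
    (r : Fin (m + 1) → ℝ) (w : Fin m → ℝ) (v : ℝ)
    (hF : (Qᵀ * Q - vecMulVec w w).IsHermitian) : (socMatH Q r w v).IsHermitian :=
  isHermitian_fromBlocks_iff.2 ⟨by ext; simp, by ext; simp, by ext; simp, hF⟩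

lemma eucNorm_le_iff {n : ℕ} (x : Fin n → ℝ) (b : ℝ) :
    eucNorm x ≤ b ↔ 0 ≤ b ∧ x ⬝ᵥ x ≤ b ^ 2 :=
  Real.sqrt_le_iff

lemma exists_affine_sq_ge_of_lt_sq {X k c ρ : ℝ} (hk : 0 < k) (hX : X < k ^ 2) (hρ : 0 ≤ ρ) :
    ∃ t : ℝ, 0 ≤ t * k + c ∧ t ^ 2 * X + ρ ≤ (t * k + c) ^ 2 := by
  set δ := k ^ 2 - X with hδ
  have hδ0 : 0 < δ := by linarith
  have hcc := neg_abs_le c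
  have hc0 := abs_nonneg c
  set d := |c|
  have h₁ : 0 ≤ (2 * k * d + ρ) / δ := by positivity
  have h₂ : 0 ≤ d / k := by positivity
  set t := (2 * k * d + ρ) / δ + d / k + 1
  have ht : 1 ≤ t := by simp only [t]; linarith
  have htk : d ≤ t * k := by
    rw [← div_le_iff₀ hk]; simp only [t]; linarith
  have htδ : 2 * k * d + ρ ≤ t * δ := by
    rw [← div_le_iff₀ hδ0]; simp only [t]; linarith
  refine ⟨t, by linarith, ?_⟩
  have h₃ : t * (2 * k * d + ρ) ≤ t * (t * δ) := mul_le_mul_of_nonneg_left htδ (by linarith)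
  have h₄ : ρ ≤ t * ρ := le_mul_of_one_le_left hρ ht
  have h₅ : 0 ≤ t * k * (d + c) := mul_nonneg (by positivity) (by linarith)
  have hXe : X = k ^ 2 - δ := by linarith
  rw [hXe]
  nlinarith [sq_nonneg c]

lemma exists_affine_sq_ge_of_eq_sq {X k c ρ : ℝ} (hk : 0 < k) (hX : X = k ^ 2) (hc : 0 < c)
    (hρ : 0 ≤ ρ) : ∃ t : ℝ, 0 ≤ t * k + c ∧ t ^ 2 * X + ρ ≤ (t * k + c) ^ 2 := by
  refine ⟨ρ / (2 * k * c), by positivity, ?_⟩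
  have h : ρ / (2 * k * c) * (2 * k * c) = ρ := by field_simp
  rw [hX]
  nlinarith [sq_nonneg c]

/-- Orthogonal decomposition of `Q u + r` at the least-squares solution: `ρ` is the squared
distance from `-r` to the range of `Q`. -/
lemma exists_residual {m : ℕ} (Q : Matrix (Fin (m + 1)) (Fin m) ℝ) (r : Fin (m + 1) → ℝ)
    (hrQ : ∀ (a : ℝ) (y : Fin m → ℝ), Q *ᵥ y + a • r = 0 → a = 0 ∧ y = 0)
    {u₀ : Fin m → ℝ} (hu₀ : (Qᵀ * Q) *ᵥ u₀ = Qᵀ *ᵥ r) :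
    ∃ ρ : ℝ, 0 < ρ ∧ ∀ x, (Q *ᵥ (x - u₀) + r) ⬝ᵥ (Q *ᵥ (x - u₀) + r) =
      (Q *ᵥ x) ⬝ᵥ (Q *ᵥ x) + ρ := by
  set e := r - Q *ᵥ u₀ with he
  have he0 : e ≠ 0 := fun h => one_ne_zero
    (hrQ 1 (-u₀) (by rw [mulVec_neg, one_smul, neg_add_eq_sub, ← he, h])).1
  have horth : Qᵀ *ᵥ e = 0 := by rw [he, mulVec_sub, mulVec_mulVec, hu₀, sub_self]
  refine ⟨e ⬝ᵥ e, ?_, fun x => ?_⟩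
  · exact lt_of_le_of_ne (Finset.sum_nonneg fun i _ => mul_self_nonneg _)
      fun h => he0 (dotProduct_self_eq_zero.1 h.symm)
  · have hx : Q *ᵥ (x - u₀) + r = Q *ᵥ x + e := by rw [he, mulVec_sub]; abel
    have hxe : e ⬝ᵥ Q *ᵥ x = 0 := by
      rw [← dotProduct_transpose_mulVec, horth, dotProduct_zero]
    rw [hx, add_dotProduct, dotProduct_add, dotProduct_add, dotProduct_comm _ e, hxe]
    ring

/-- Theorem 2 (necessary and sufficient condition for pointwise feasibility):
assuming `[r Q]` is invertible, the SOC constraint `‖Q u + r‖₂ ≤ w u + v` is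
feasible iff `H` is not positive definite and one of the three cases holds,
where `λ†` is the smallest eigenvalue of `F = QᵀQ − wᵀw`:
(1) `λ† < 0`; (2) `λ† > 0` and `v − w F⁻¹ (Qᵀr − wᵀv) ≥ 0`;
(3) `λ† = 0` and `v − w (QᵀQ)⁻¹ Qᵀ r > 0`. -/
theorem nec_and_suf_condition_feasibility {m : ℕ} (hm : 0 < m)
    (Q : Matrix (Fin (m + 1)) (Fin m) ℝ) (r : Fin (m + 1) → ℝ)
    (w : Fin m → ℝ) (v : ℝ)
    (hrQ : IsUnit
      (Matrix.of (fun i => Fin.cons (r i) (Q i)) :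
        Matrix (Fin (m + 1)) (Fin (m + 1)) ℝ))
    (hF : (Qᵀ * Q - Matrix.vecMulVec w w).IsHermitian) :
    (∃ u : Fin m → ℝ, eucNorm (Q *ᵥ u + r) ≤ w ⬝ᵥ u + v) ↔
      (¬ (socMatH Q r w v).PosDef ∧
        ((⨅ i, hF.eigenvalues i) < 0 ∨
         (0 < (⨅ i, hF.eigenvalues i) ∧
           v - w ⬝ᵥ ((Qᵀ * Q - Matrix.vecMulVec w w)⁻¹ *ᵥ (Qᵀ *ᵥ r - v • w))
             ≥ 0) ∨
         ((⨅ i, hF.eigenvalues i) = 0 ∧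
           v - w ⬝ᵥ ((Qᵀ * Q)⁻¹ *ᵥ (Qᵀ *ᵥ r)) > 0))) := by
  have : Nonempty (Fin m) := ⟨⟨0, hm⟩⟩
  have hindep : ∀ (a : ℝ) (y : Fin m → ℝ), Q *ᵥ y + a • r = 0 → a = 0 ∧ y = 0 := by
    intro a y h
    have h0 : (Fin.cons a y : Fin (m + 1) → ℝ) = 0 := by
      refine mulVec_injective_of_isUnit hrQ ?_
      rw [mulVec_zero, ← h]
      funext i
      simp [mulVec, dotProduct, Fin.sum_univ_succ, mul_comm, add_comm]
    exact ⟨by simpa using congrFun h0 0, funext fun i => by simpa using congrFun h0 i.succ⟩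
  have hker : ∀ y : Fin m → ℝ, Q *ᵥ y = 0 → y = 0 := fun y h =>
    (hindep 0 y (by simp [h])).2
  have hN : (Qᵀ * Q).PosDef := by
    rw [← conjTranspose_eq_transpose_of_trivial]
    refine PosDef.conjTranspose_mul_self Q fun x y h => ?_
    exact sub_eq_zero.1 (hker _ (by rw [mulVec_sub]; exact sub_eq_zero.2 h))
  have hNdet := (isUnit_iff_isUnit_det _).1 hN.isUnit
  set u₀ := (Qᵀ * Q)⁻¹ *ᵥ (Qᵀ *ᵥ r) with hu₀
  have hNu₀ : (Qᵀ * Q) *ᵥ u₀ = Qᵀ *ᵥ r := by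
    rw [hu₀, mulVec_mulVec, mul_nonsing_inv _ hNdet, one_mulVec]
  obtain ⟨ρ, hρ, hdecomp⟩ := exists_residual Q r hindep hNu₀
  set c := v - w ⬝ᵥ u₀ with hc
  have hshift : ∀ x, w ⬝ᵥ (x - u₀) + v = w ⬝ᵥ x + c := by
    intro x; rw [dotProduct_sub, hc]; ring
  have hfeas : (∃ u : Fin m → ℝ, eucNorm (Q *ᵥ u + r) ≤ w ⬝ᵥ u + v) ↔
      ∃ x, 0 ≤ w ⬝ᵥ x + c ∧ (Q *ᵥ x) ⬝ᵥ (Q *ᵥ x) + ρ ≤ (w ⬝ᵥ x + c) ^ 2 := by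
    simp only [eucNorm_le_iff]
    constructor
    · rintro ⟨u, hu⟩
      refine ⟨u + u₀, ?_⟩
      rwa [← hdecomp, ← hshift, add_sub_cancel_right]
    · rintro ⟨x, hx⟩
      refine ⟨x - u₀, ?_⟩
      rwa [hdecomp, hshift]
  have hscale : ∀ x, (∀ k : ℝ, 0 < k → k ^ 2 = (w ⬝ᵥ x) ^ 2 → ∃ t : ℝ, 0 ≤ t * k + c ∧
        t ^ 2 * ((Q *ᵥ x) ⬝ᵥ (Q *ᵥ x)) + ρ ≤ (t * k + c) ^ 2) → w ⬝ᵥ x ≠ 0 →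
      ∃ x, 0 ≤ w ⬝ᵥ x + c ∧ (Q *ᵥ x) ⬝ᵥ (Q *ᵥ x) + ρ ≤ (w ⬝ᵥ x + c) ^ 2 := by
    intro x h hx
    obtain ⟨s, hs2, hs⟩ : ∃ s : ℝ, s ^ 2 = 1 ∧ 0 < s * (w ⬝ᵥ x) := by
      rcases hx.lt_or_gt with hx | hx
      · exact ⟨-1, by norm_num, by linarith⟩
      · exact ⟨1, by norm_num, by linarith⟩
    obtain ⟨t, ht, ht'⟩ := h _ hs (by rw [mul_pow, hs2, one_mul])
    refine ⟨(t * s) • x, ?_, ?_⟩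
    · rwa [dotProduct_smul, smul_eq_mul, mul_assoc]
    · rw [mulVec_smul, dotProduct_smul, dotProduct_smul, smul_dotProduct, smul_eq_mul,
        smul_eq_mul, smul_eq_mul, mul_assoc t s (w ⬝ᵥ x), ← mul_assoc (t * s) (t * s)]
      rwa [show t * s * (t * s) = t ^ 2 by linear_combination t ^ 2 * hs2]
  have hform := dotProduct_gram_sub_vecMulVec_mulVec Q w
  have hQnonneg : ∀ x, 0 ≤ (Q *ᵥ x) ⬝ᵥ (Q *ᵥ x) := fun x =>
    Finset.sum_nonneg fun i _ => mul_self_nonneg _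
  set F := Qᵀ * Q - vecMulVec w w with hFdef
  set lam := ⨅ i, hF.eigenvalues i with hlam
  obtain ⟨i₀, hi₀⟩ := exists_eq_ciInf_of_finite (f := hF.eigenvalues)
  have hle : ∀ i, lam ≤ hF.eigenvalues i := fun i => ciInf_le (Set.finite_range _).bddBelow i
  have hpsd : F.PosSemidef ↔ 0 ≤ lam := by
    rw [hF.posSemidef_iff_eigenvalues_nonneg]
    exact ⟨fun h => (h i₀).trans_eq hi₀, fun h i => h.trans (hle i)⟩
  have hpd : F.PosDef ↔ 0 < lam := by
    rw [hF.posDef_iff_eigenvalues_pos]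
    exact ⟨fun h => (h i₀).trans_eq hi₀, fun h i => h.trans_le (hle i)⟩
  have hpsd' : 0 ≤ lam → ∀ x, (w ⬝ᵥ x) ^ 2 ≤ (Q *ᵥ x) ⬝ᵥ (Q *ᵥ x) := by
    intro h x
    have := (hpsd.2 h).dotProduct_mulVec_nonneg x
    rw [star_trivial, hform] at this
    linarith
  have hpd' : 0 < lam → ∀ x, x ≠ 0 → (w ⬝ᵥ x) ^ 2 < (Q *ᵥ x) ⬝ᵥ (Q *ᵥ x) := by
    intro h x hx
    have := (hpd.2 h).dotProduct_mulVec_pos hx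
    rw [star_trivial, hform] at this
    linarith
  have hcpos : 0 ≤ lam → (∃ x, 0 ≤ w ⬝ᵥ x + c ∧
      (Q *ᵥ x) ⬝ᵥ (Q *ᵥ x) + ρ ≤ (w ⬝ᵥ x + c) ^ 2) → 0 < c := by
    rintro h ⟨x, hx, hx'⟩
    by_contra! hc0
    nlinarith [hpsd' h x]
  have hd : 0 < lam → (0 ≤ v - w ⬝ᵥ (F⁻¹ *ᵥ (Qᵀ *ᵥ r - v • w)) ↔ 0 ≤ c) := by
    intro h
    set z := F⁻¹ *ᵥ (Qᵀ *ᵥ r - v • w) with hz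
    set d := v - w ⬝ᵥ z with hd
    have hFz : F *ᵥ z = Qᵀ *ᵥ r - v • w := by
      rw [hz, mulVec_mulVec, mul_nonsing_inv _ ((isUnit_iff_isUnit_det _).1 (hpd.2 h).isUnit),
        one_mulVec]
    have hNy : (Qᵀ * Q) *ᵥ (z - u₀) = -d • w := by
      rw [hFdef, sub_mulVec, vecMulVec_mulVec, op_smul_eq_smul, ← hNu₀] at hFz
      rw [mulVec_sub, hd, sub_eq_iff_eq_add.1 hFz]
      module
    have hwy : w ⬝ᵥ (z - u₀) = c - d := by rw [dotProduct_sub, hc, hd]; ring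
    have hQy : (Q *ᵥ (z - u₀)) ⬝ᵥ (Q *ᵥ (z - u₀)) = -d * (c - d) := by
      rw [← dotProduct_transpose_mulVec, mulVec_mulVec, hNy, dotProduct_smul,
        dotProduct_comm, hwy, smul_eq_mul]
    rcases eq_or_ne (z - u₀) 0 with hy | hy
    · rw [hy, dotProduct_zero] at hwy
      rw [show d = c by linarith]
    · have := hpd' h _ hy
      rw [hwy, hQy] at this
      constructor <;> intro <;> by_contra! <;> nlinarith
  rw [hfeas]
  constructor
  · intro hx
    refine ⟨fun hH => ?_, ?_⟩
    · obtain ⟨x, -, hx⟩ := hx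
      have := hH.dotProduct_mulVec_pos (x := Sum.elim (fun _ => 1) (x - u₀))
        fun h => one_ne_zero (congrFun h (Sum.inl 0))
      rw [star_trivial, dotProduct_socMatH_mulVec, one_smul, one_mul, hdecomp, hshift] at this
      linarith
    · rcases lt_trichotomy lam 0 with h | h | h
      · exact Or.inl h
      · exact Or.inr (Or.inr ⟨h, hcpos h.ge hx⟩)
      · exact Or.inr (Or.inl ⟨h, (hd h).2 (hcpos h.le hx).le⟩)
  · rintro ⟨hH, h | ⟨h, hdn⟩ | ⟨h, hc0⟩⟩
    · obtain ⟨x, hx⟩ : ∃ x, (Q *ᵥ x) ⬝ᵥ (Q *ᵥ x) < (w ⬝ᵥ x) ^ 2 := by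
        by_contra! hall
        refine h.not_ge (hpsd.1 (.of_dotProduct_mulVec_nonneg hF fun x => ?_))
        rw [star_trivial, hform]
        linarith [hall x]
      refine hscale x (fun k hk hkx => exists_affine_sq_ge_of_lt_sq hk (hkx ▸ hx) hρ.le) ?_
      intro h0
      rw [h0] at hx
      linarith [hQnonneg x]
    · have hc0 := (hd h).1 hdn
      obtain ⟨a, y, hay, hle⟩ : ∃ (a : ℝ) (y : Fin m → ℝ), (a = 0 → y ≠ 0) ∧
          (Q *ᵥ y + a • r) ⬝ᵥ (Q *ᵥ y + a • r) ≤ (w ⬝ᵥ y + a * v) ^ 2 := by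
        by_contra! hall
        refine hH (.of_dotProduct_mulVec_pos (isHermitian_socMatH Q r w v hF) fun x hx => ?_)
        have hxe : x = Sum.elim (fun _ => x (Sum.inl 0)) (x ∘ Sum.inr) := by
          funext i
          rcases i with i | i
          · rw [Subsingleton.elim i 0, Sum.elim_inl]
          · rfl
        rw [star_trivial, hxe, dotProduct_socMatH_mulVec, sub_pos]
        refine hall _ _ fun h0 h1 => hx ?_
        rw [hxe, h0, h1]
        funext i
        rcases i with i | i <;> rfl
      rcases eq_or_ne a 0 with rfl | ha
      · have := hpd' h y (hay rfl)
        simp only [zero_smul, add_zero, zero_mul] at hle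
        linarith
      · set x := a⁻¹ • y + u₀ with hx
        have hy : y = a • (x - u₀) := by
          rw [hx, add_sub_cancel_right, smul_smul, mul_inv_cancel₀ ha, one_smul]
        have hle' : (Q *ᵥ x) ⬝ᵥ (Q *ᵥ x) + ρ ≤ (w ⬝ᵥ x + c) ^ 2 := by
          rw [hy, mulVec_smul, ← smul_add, dotProduct_smul, smul_dotProduct, hdecomp,
            dotProduct_smul, smul_eq_mul, smul_eq_mul, smul_eq_mul, ← mul_add, hshift,
            mul_pow, ← mul_assoc, ← pow_two] at hle
          exact le_of_mul_le_mul_left hle (by positivity)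
        rcases le_or_gt 0 (w ⬝ᵥ x + c) with hs | hs
        · exact ⟨x, hs, hle'⟩
        · refine ⟨-x, ?_, ?_⟩
          · rw [dotProduct_neg]; linarith
          · rw [mulVec_neg, neg_dotProduct_neg, dotProduct_neg]
            nlinarith
    · obtain ⟨x, hx0, hx⟩ : ∃ x, x ≠ 0 ∧ (Q *ᵥ x) ⬝ᵥ (Q *ᵥ x) ≤ (w ⬝ᵥ x) ^ 2 := by
        by_contra! hall
        refine h.not_gt (hpd.1 (.of_dotProduct_mulVec_pos hF fun x hx => ?_))
        rw [star_trivial, hform]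
        linarith [hall x hx]
      have hxe := le_antisymm hx (hpsd' h.ge x)
      refine hscale x (fun k hk hkx =>
        exists_affine_sq_ge_of_eq_sq hk (hkx ▸ hxe) hc0 hρ.le) fun h0 => hx0 (hker x ?_)
      rw [h0, zero_pow two_ne_zero] at hxe
      exact dotProduct_self_eq_zero.1 hxe
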